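/- arXiv:1411.3432 — 2 statements merged into one kernel-verified Lean document; each statement's English description precedes it below -/
import Mathlib

section
/- Suppose n ≡ 2 (mod 4). Let φ be a bijection of C_n that stabilizes the set {0̄, 1̄}. Then φ is an {n/2, n}-isometry if and only if there exist a permutation π of {1,...,n} and a subset S of X such that for every word c: φ(c) = π(c) if {c, c + 1̄} ∩ S = ∅, and φ(c) = π(c) + 1̄ if {c, c + 1̄} ∩ S ≠ ∅. -/
/-!
Let `n = 2m` with `m` odd. A permutation `φ` preserving distance `n` commutes with complementation,
so it acts on the folded cube, the words up to complement. If it preserves distance `m`, it also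
preserves the number of words at distance `m` from both of two given words, which for words at
distance `2k` is `centralBinom k * centralBinom (m - k)`. By strict log-convexity of `centralBinom`
this number is smallest exactly when `2k = m ± 1`, so `φ` preserves the relation "at distance
`m ± 1`". Two words are at distance `1` or `n - 1` if and only if every word at distance `m` from
one is at distance `m ± 1` from the other, so `φ` preserves adjacency in the folded cube.

In the folded cube, `φ` maps the edge in direction `i` at a word `x` to an edge in some direction
`σ x i`. For `n ≥ 5` opposite sides of a square have the same direction and each pair of directions
at a vertex spans a unique square, so `σ x` does not depend on `x`; for `n = 2` the folded cube has
only one edge. Hence, up to complement and translation, `φ` is a permutation of coordinates, and the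
set `S` records the complementary pairs on which a complement is taken.
-/

open Finset symmDiff

section FinsetCard

variable {α : Type*} [DecidableEq α]

theorem card_symmDiff_add_two_mul_card_inter (s t : Finset α) :
    #(s ∆ t) + 2 * #(s ∩ t) = #s + #t := by
  have hcard : #(s ∆ t) = #(s \ t) + #(t \ s) :=
    card_union_of_disjoint disjoint_sdiff_sdiff
  have hs := card_inter_add_card_sdiff s t
  have ht := card_inter_add_card_sdiff t s
  rw [inter_comm] at ht
  lia

variable [Fintype α]

theorem card_filter_card_inter_card_sdiff (D : Finset α) (a b : ℕ) :
    #{U : Finset α | #(D ∩ U) = a ∧ #(U \ D) = b} = (#D).choose a * (#Dᶜ).choose b := by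
  have hparts {A B : Finset α} (hAD : A ⊆ D) (hDB : Disjoint D B) :
      D ∩ (A ∪ B) = A ∧ (A ∪ B) \ D = B := by
    rw [inter_union_distrib_left, inter_eq_right.2 hAD, disjoint_iff_inter_eq_empty.1 hDB,
      union_empty, union_sdiff_distrib, sdiff_eq_empty_iff_subset.2 hAD, empty_union,
      hDB.symm.sdiff_eq_left]
    exact ⟨rfl, rfl⟩
  rw [← card_powersetCard, ← card_powersetCard, ← card_product]
  refine card_nbij' (fun U => (D ∩ U, U \ D)) (fun p => p.1 ∪ p.2) ?_ ?_ ?_ ?_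
  · intro U hU
    simpa [inter_subset_left, subset_compl_iff_disjoint_left, disjoint_sdiff] using hU
  · rintro ⟨A, B⟩ hAB
    simp only [coe_product, Set.mem_prod, mem_coe, mem_powersetCard,
      subset_compl_iff_disjoint_left] at hAB
    obtain ⟨⟨hAD, hA⟩, hDB, hB⟩ := hAB
    simp only [coe_filter_univ, Set.mem_ofPred_eq, hparts hAD hDB, hA, hB, and_self]
  · intro U _
    dsimp only
    rw [inter_comm, union_comm, sdiff_union_inter]
  · rintro ⟨A, B⟩ hAB
    simp only [coe_product, Set.mem_prod, mem_coe, mem_powersetCard,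
      subset_compl_iff_disjoint_left] at hAB
    simp only [hparts hAB.1.1 hAB.2.1]

theorem forall_card_symmDiff_half_iff {m : ℕ} (hcard : Fintype.card α = 2 * m)
    (D : Finset α) :
    (∀ U : Finset α, #U = m → #(D ∆ U) + 1 = m ∨ #(D ∆ U) = m + 1) ↔
      #D = 1 ∨ #D + 1 = 2 * m := by
  have hD : #D ≤ 2 * m := hcard ▸ card_le_univ D
  constructor
  · intro h
    rcases le_total #D m with hDm | hDm
    · obtain ⟨U, hDU, -, hU⟩ := exists_subsuperset_card_eq (subset_univ D) hDm
        (by rw [card_univ]; lia)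
      have hsymm := card_symmDiff_add_two_mul_card_inter D U
      rw [inter_eq_left.2 hDU] at hsymm
      have := h U hU
      lia
    · obtain ⟨U, hUD, hU⟩ := exists_subset_card_eq hDm
      have hsymm := card_symmDiff_add_two_mul_card_inter D U
      rw [inter_eq_right.2 hUD] at hsymm
      have := h U hU
      lia
  · intro h U hU
    have hsymm := card_symmDiff_add_two_mul_card_inter D U
    have hunion := card_union_add_card_inter D U
    have hle : #(D ∪ U) ≤ 2 * m := hcard ▸ card_le_univ _
    have hinterD : #(D ∩ U) ≤ #D := card_le_card inter_subset_left
    have hinterU : #(D ∩ U) ≤ #U := card_le_card inter_subset_right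
    lia

end FinsetCard

section CentralBinom

theorem centralBinom_succ_mul_lt_mul_centralBinom_succ {a b : ℕ} (h : a < b) :
    (a + 1).centralBinom * b.centralBinom < a.centralBinom * (b + 1).centralBinom := by
  have ha := Nat.succ_mul_centralBinom_succ a
  have hb := Nat.succ_mul_centralBinom_succ b
  have hpos : 0 < a.centralBinom * b.centralBinom :=
    Nat.mul_pos (Nat.centralBinom_pos a) (Nat.centralBinom_pos b)
  refine lt_of_mul_lt_mul_left (a := (a + 1) * (b + 1)) ?_ (Nat.zero_le _)
  calc (a + 1) * (b + 1) * ((a + 1).centralBinom * b.centralBinom)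
      = ((a + 1) * (a + 1).centralBinom) * ((b + 1) * b.centralBinom) := by ring
    _ = (2 * (2 * a + 1) * (b + 1)) * (a.centralBinom * b.centralBinom) := by rw [ha]; ring
    _ < (2 * (2 * b + 1) * (a + 1)) * (a.centralBinom * b.centralBinom) :=
        Nat.mul_lt_mul_of_pos_right (by linarith) hpos
    _ = ((b + 1) * (b + 1).centralBinom) * ((a + 1) * a.centralBinom) := by rw [hb]; ring
    _ = (a + 1) * (b + 1) * (a.centralBinom * (b + 1).centralBinom) := by ring

theorem centralBinom_mul_centralBinom_lt {a b c d : ℕ} (hac : a < c) (hcd : c ≤ d)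
    (hsum : a + b = c + d) :
    c.centralBinom * d.centralBinom < a.centralBinom * b.centralBinom := by
  induction c, hac using Nat.le_induction generalizing d with
  | base =>
    obtain rfl : b = d + 1 := by lia
    exact centralBinom_succ_mul_lt_mul_centralBinom_succ hcd
  | succ c _ ih =>
    exact (centralBinom_succ_mul_lt_mul_centralBinom_succ hcd).trans (ih (by lia) (by lia))

theorem centralBinom_mul_eq_centralBinom_mul_succ_iff {a b q : ℕ} (hsum : a + b = 2 * q + 1) :
    a.centralBinom * b.centralBinom = q.centralBinom * (q + 1).centralBinom ↔
      a = q ∨ b = q := by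
  constructor
  · contrapose!
    rintro ⟨haq, hbq⟩
    rcases lt_or_gt_of_ne haq with ha | ha
    · exact (centralBinom_mul_centralBinom_lt ha (by lia) (by lia)).ne'
    · rw [mul_comm a.centralBinom]
      exact (centralBinom_mul_centralBinom_lt (by lia) (by lia) (by lia)).ne'
  · rintro (rfl | rfl)
    · rw [show b = a + 1 by lia]
    · rw [show a = b + 1 by lia, mul_comm]

end CentralBinom

theorem zmod_two_ne_iff_eq_add_one (a b : ZMod 2) : a ≠ b ↔ a = b + 1 := by
  decide +revert

theorem word_induction {ι : Type*} [Finite ι] [DecidableEq ι] {p : (ι → ZMod 2) → Prop}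
    (zero : p 0) (add_single : ∀ x i, p x → p (x + Pi.single i 1)) (x : ι → ZMod 2) : p x := by
  cases nonempty_fintype ι
  suffices h : ∀ s : Finset ι, p (∑ i ∈ s, Pi.single i (x i)) by
    simpa only [univ_sum_single] using h univ
  intro s
  induction s using Finset.induction with
  | empty => exact zero
  | insert i s hi ih =>
    rw [sum_insert hi, add_comm]
    by_cases hxi : x i = 0
    · simpa only [hxi, Pi.single_zero, add_zero] using ih
    · rw [(zmod_two_ne_iff_eq_add_one _ _).1 hxi]
      exact add_single _ i ih

section HammingDist

variable {ι : Type*} [Fintype ι]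

theorem hammingDist_add_one_add_hammingDist (x y : ι → ZMod 2) :
    hammingDist x (y + 1) + hammingDist x y = Fintype.card ι := by
  rw [add_comm, hammingDist, hammingDist, ← card_univ,
    ← card_filter_add_card_filter_not (s := univ) fun i => x i ≠ y i]
  congr 3
  ext i
  simp [zmod_two_ne_iff_eq_add_one, add_assoc, ZModModule.add_self]

theorem hammingDist_eq_card_iff {x y : ι → ZMod 2} :
    hammingDist x y = Fintype.card ι ↔ y = x + 1 := by
  have h := hammingDist_add_one_add_hammingDist x y
  rw [show hammingDist x y = Fintype.card ι ↔ hammingDist x (y + 1) = 0 by lia,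
    hammingDist_eq_zero, ← ZModModule.sub_eq_add y, eq_sub_iff_add_eq, eq_comm]

theorem preserves_hammingDist_card_iff {φ : (ι → ZMod 2) → ι → ZMod 2} :
    (∀ x y, hammingDist x y = Fintype.card ι → hammingDist (φ x) (φ y) = Fintype.card ι) ↔
      ∀ x, φ (x + 1) = φ x + 1 := by
  simp only [hammingDist_eq_card_iff, forall_eq]

theorem hammingDist_comp_perm (π : Equiv.Perm ι) (x y : ι → ZMod 2) :
    hammingDist (x ∘ π) (y ∘ π) = hammingDist x y :=
  card_equiv π (by simp)

variable [DecidableEq ι]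

/-- The words `y`, encoded by the set of coordinates in which they differ from a fixed word `x`. -/
def diffEquiv (x : ι → ZMod 2) : (ι → ZMod 2) ≃ Finset ι where
  toFun y := {i | x i ≠ y i}
  invFun A i := if i ∈ A then x i + 1 else x i
  left_inv y := by
    ext i
    simp only [mem_filter_univ]
    generalize x i = a, y i = b
    decide +revert
  right_inv A := by
    ext i
    by_cases hi : i ∈ A <;> simp [hi]

theorem card_diffEquiv (x y : ι → ZMod 2) : #(diffEquiv x y) = hammingDist x y := rfl

theorem diffEquiv_symmDiff_diffEquiv (x y z : ι → ZMod 2) :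
    diffEquiv x y ∆ diffEquiv x z = diffEquiv y z := by
  ext i
  simp only [diffEquiv, Equiv.coe_fn_mk, mem_symmDiff, mem_filter_univ]
  generalize x i = a, y i = b, z i = c
  decide +revert

theorem hammingDist_eq_one_iff {x y : ι → ZMod 2} :
    hammingDist x y = 1 ↔ ∃ i, y = x + Pi.single i 1 := by
  have hsingleton (i : ι) : (diffEquiv x).symm {i} = x + Pi.single i 1 := by
    ext k
    by_cases hk : k = i <;> simp [diffEquiv, hk]
  simp only [← card_diffEquiv, card_eq_one, ← Equiv.eq_symm_apply, hsingleton]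

/-- The words at distance `m` from both `x` and `y`. -/
def sphereInter (m : ℕ) (x y : ι → ZMod 2) : Finset (ι → ZMod 2) :=
  {z | hammingDist x z = m ∧ hammingDist y z = m}

theorem card_sphereInter_eq_card_filter (m : ℕ) (x y : ι → ZMod 2) :
    #(sphereInter m x y) = #{U | #U = m ∧ #(diffEquiv x y ∆ U) = m} :=
  card_equiv (diffEquiv x) fun z => by
    simp only [sphereInter, mem_filter_univ, diffEquiv_symmDiff_diffEquiv, card_diffEquiv]

theorem card_sphereInter {k m : ℕ} {x y : ι → ZMod 2} (hkm : k ≤ m)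
    (hxy : hammingDist x y = 2 * k) :
    #(sphereInter m x y) = k.centralBinom * (Fintype.card ι - 2 * k).choose (m - k) := by
  rw [card_sphereInter_eq_card_filter, Nat.centralBinom, ← hxy, ← card_diffEquiv x y,
    ← card_compl, ← card_filter_card_inter_card_sdiff]
  congr 1
  ext U
  have hsymm := card_symmDiff_add_two_mul_card_inter (diffEquiv x y) U
  have hU := card_inter_add_card_sdiff U (diffEquiv x y)
  rw [inter_comm] at hU
  rw [card_diffEquiv] at hsymm
  simp only [mem_filter_univ]
  lia

theorem even_hammingDist_of_sphereInter_nonempty {m : ℕ} {x y : ι → ZMod 2}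
    (h : (sphereInter m x y).Nonempty) : Even (hammingDist x y) := by
  obtain ⟨z, hz⟩ := h
  simp only [sphereInter, mem_filter_univ] at hz
  have hsymm := card_symmDiff_add_two_mul_card_inter (diffEquiv x y) (diffEquiv x z)
  simp only [diffEquiv_symmDiff_diffEquiv, card_diffEquiv, hz] at hsymm
  exact ⟨#(diffEquiv x y ∩ diffEquiv x z), by lia⟩

theorem card_sphereInter_eq_min_iff {q : ℕ} (hcard : Fintype.card ι = 2 * (2 * q + 1))
    (x y : ι → ZMod 2) :
    #(sphereInter (2 * q + 1) x y) = q.centralBinom * (q + 1).centralBinom ↔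
      hammingDist x y = 2 * q ∨ hammingDist x y = 2 * q + 2 := by
  have hle : hammingDist x y ≤ Fintype.card ι := hammingDist_le_card_fintype
  have hcount {k : ℕ} (hk : hammingDist x y = 2 * k) : #(sphereInter (2 * q + 1) x y) =
      k.centralBinom * (2 * q + 1 - k).centralBinom := by
    rw [card_sphereInter (by lia) hk, Nat.centralBinom, Nat.centralBinom, hcard, Nat.mul_sub]
  constructor
  · intro h
    have hpos : 0 < #(sphereInter (2 * q + 1) x y) :=
      h ▸ Nat.mul_pos (Nat.centralBinom_pos _) (Nat.centralBinom_pos _)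
    obtain ⟨k, hk⟩ := (even_hammingDist_of_sphereInter_nonempty (card_pos.1 hpos)).two_dvd
    rw [hcount hk, centralBinom_mul_eq_centralBinom_mul_succ_iff (by lia)] at h
    lia
  · rintro (h | h)
    · rw [hcount h, centralBinom_mul_eq_centralBinom_mul_succ_iff (by lia)]
      exact .inl rfl
    · rw [hcount (k := q + 1) h, centralBinom_mul_eq_centralBinom_mul_succ_iff (by lia)]
      exact .inr (by lia)

end HammingDist

section Preserving

variable {ι : Type*} [Fintype ι]

theorem hammingDist_eq_one_or_add_one_eq_iff {m : ℕ} (hcard : Fintype.card ι = 2 * m)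
    (x y : ι → ZMod 2) :
    hammingDist x y = 1 ∨ hammingDist x y + 1 = Fintype.card ι ↔
      ∀ z, hammingDist x z = m → hammingDist y z + 1 = m ∨ hammingDist y z = m + 1 := by
  classical
  rw [hcard, ← card_diffEquiv, ← forall_card_symmDiff_half_iff hcard,
    ← (diffEquiv x).forall_congr_right]
  simp only [diffEquiv_symmDiff_diffEquiv, card_diffEquiv]

variable {φ : Equiv.Perm (ι → ZMod 2)}

theorem hammingDist_map_eq_iff {m : ℕ}
    (h : ∀ x y, hammingDist x y = m → hammingDist (φ x) (φ y) = m) (x y : ι → ZMod 2) :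
    hammingDist (φ x) (φ y) = m ↔ hammingDist x y = m := by
  refine ⟨fun hxy => ?_, h x y⟩
  simpa using Equiv.Perm.perm_symm_on_of_perm_on_finite (f := φ.prodCongr φ)
    (p := fun z => hammingDist z.1 z.2 = m) (fun z => h z.1 z.2) (x := (φ x, φ y)) hxy

theorem card_sphereInter_map [DecidableEq ι] {m : ℕ}
    (h : ∀ x y, hammingDist x y = m → hammingDist (φ x) (φ y) = m) (x y : ι → ZMod 2) :
    #(sphereInter m (φ x) (φ y)) = #(sphereInter m x y) :=
  .symm <| card_equiv φ fun z => by
    simp only [sphereInter, mem_filter_univ, hammingDist_map_eq_iff h]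

theorem hammingDist_map_add_one_eq_or_eq_add_one_iff {m : ℕ} (hm : Odd m)
    (hcard : Fintype.card ι = 2 * m)
    (h : ∀ x y, hammingDist x y = m → hammingDist (φ x) (φ y) = m) (x y : ι → ZMod 2) :
    hammingDist (φ x) (φ y) + 1 = m ∨ hammingDist (φ x) (φ y) = m + 1 ↔
      hammingDist x y + 1 = m ∨ hammingDist x y = m + 1 := by
  classical
  obtain ⟨q, rfl⟩ := hm
  simp only [add_left_inj, add_assoc, Nat.reduceAdd, ← card_sphereInter_eq_min_iff hcard,
    card_sphereInter_map h]

theorem hammingDist_map_eq_one_or_add_one_eq {m : ℕ} (hm : Odd m)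
    (hcard : Fintype.card ι = 2 * m)
    (h : ∀ x y, hammingDist x y = m → hammingDist (φ x) (φ y) = m) {x y : ι → ZMod 2}
    (hxy : hammingDist x y = 1) :
    hammingDist (φ x) (φ y) = 1 ∨ hammingDist (φ x) (φ y) + 1 = Fintype.card ι := by
  have hnear := (hammingDist_eq_one_or_add_one_eq_iff hcard x y).1 (.inl hxy)
  rw [hammingDist_eq_one_or_add_one_eq_iff hcard, ← φ.forall_congr_right]
  intro z hz
  rw [hammingDist_map_eq_iff h] at hz
  exact (hammingDist_map_add_one_eq_or_eq_add_one_iff hm hcard h y z).2 (hnear z hz)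

end Preserving

/-- The words indexed by `ι` up to complementation: the vertices of the folded cube, as a vector
space over `ZMod 2`. -/
abbrev FoldedCube (ι : Type*) : Type _ :=
  (ι → ZMod 2) ⧸ Submodule.span (ZMod 2) {(1 : ι → ZMod 2)}

namespace FoldedCube

/-- The class of a word up to complement. -/
abbrev proj {ι : Type*} : (ι → ZMod 2) →ₗ[ZMod 2] FoldedCube ι :=
  Submodule.mkQ _

section

variable {ι : Type*}

theorem proj_eq_proj_iff {x y : ι → ZMod 2} : proj x = proj y ↔ x = y ∨ x = y + 1 := by
  rw [Submodule.mkQ_apply, Submodule.mkQ_apply, Submodule.Quotient.eq,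
    Submodule.mem_span_singleton]
  simp only [eq_comm (b := x - y), sub_eq_iff_eq_add']
  constructor
  · rintro ⟨a, h⟩
    by_cases ha : a = 0
    · exact .inl (by simpa [ha] using h)
    · exact .inr (by simpa [(zmod_two_ne_iff_eq_add_one _ _).1 ha] using h)
  · rintro (h | h)
    · exact ⟨0, by simpa using h⟩
    · exact ⟨1, by simpa using h⟩

theorem eq_of_proj_eq_proj {x y : ι → ZMod 2} (h : proj x = proj y) {k : ι} (hk : x k = y k) :
    x = y := by
  refine (proj_eq_proj_iff.1 h).resolve_right fun hxy => ?_
  simp [hxy] at hk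

theorem eq_add_proj_comp_symm [Finite ι] [DecidableEq ι] {f : (ι → ZMod 2) → FoldedCube ι}
    {π : Equiv.Perm ι}
    (hπ : ∀ x i, f (x + Pi.single i 1) = f x + proj (Pi.single (π i) 1)) (x : ι → ZMod 2) :
    f x = f 0 + proj (x ∘ π.symm) := by
  induction x using word_induction with
  | zero => rw [Pi.zero_comp, map_zero, add_zero]
  | add_single x i hx =>
    rw [hπ, hx, Pi.add_comp, Pi.single_comp_equiv, Equiv.symm_symm, map_add, add_assoc]

end

variable {ι : Type*} [Fintype ι]

theorem hammingDist_eq_half_of_proj_eq_proj {m : ℕ} (hcard : Fintype.card ι = 2 * m)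
    {x y x' y' : ι → ZMod 2} (hx : proj x = proj x') (hy : proj y = proj y')
    (h : hammingDist x' y' = m) :
    hammingDist x y = m := by
  have hy' : hammingDist x' y = m := by
    rcases proj_eq_proj_iff.1 hy with rfl | rfl
    · exact h
    · have := hammingDist_add_one_add_hammingDist x' y'
      lia
  rw [hammingDist_comm] at hy' ⊢
  rcases proj_eq_proj_iff.1 hx with rfl | rfl
  · exact hy'
  · have := hammingDist_add_one_add_hammingDist y x'
    lia

variable [DecidableEq ι]

theorem exists_proj_eq_proj_add_single {x y : ι → ZMod 2}
    (h : hammingDist x y = 1 ∨ hammingDist x y + 1 = Fintype.card ι) :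
    ∃ i, proj y = proj x + proj (Pi.single i 1) := by
  simp only [← map_add, proj_eq_proj_iff]
  rcases h with h | h
  · obtain ⟨i, hi⟩ := hammingDist_eq_one_iff.1 h
    exact ⟨i, .inl hi⟩
  · have hadd := hammingDist_add_one_add_hammingDist x y
    obtain ⟨i, hi⟩ := hammingDist_eq_one_iff.1 (show hammingDist x (y + 1) = 1 by lia)
    exact ⟨i, .inr (by rw [← hi, add_assoc, ZModModule.add_self, add_zero])⟩

theorem proj_single_injective (hcard : 3 ≤ Fintype.card ι) :
    Function.Injective fun i : ι => proj (Pi.single i 1) := by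
  intro i j hij
  obtain ⟨k, -, hk⟩ := exists_mem_notMem_of_card_lt_card (s := {i, j}) (t := univ)
    (card_le_two.trans_lt (by rwa [card_univ]))
  simp only [mem_insert, mem_singleton, not_or] at hk
  have : (Pi.single i 1 : ι → ZMod 2) = Pi.single j 1 :=
    eq_of_proj_eq_proj hij (k := k) (by simp [hk])
  simpa [Pi.single_apply] using congrFun this i

theorem proj_single_eq_proj_single_of_card_eq_two (hcard : Fintype.card ι = 2) (i j : ι) :
    proj (Pi.single i (1 : ZMod 2)) = proj (Pi.single j 1) := by
  by_cases hij : i = j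
  · rw [hij]
  have huniv : ({i, j} : Finset ι) = univ := eq_univ_of_card _ (by rw [card_pair hij, hcard])
  refine proj_eq_proj_iff.2 (.inr (funext fun k => ?_))
  have hk : k ∈ ({i, j} : Finset ι) := huniv ▸ mem_univ k
  rcases mem_insert.1 hk with rfl | hk
  · simp [hij]
  · simp [mem_singleton.1 hk, Ne.symm hij, ZModModule.add_self]

theorem eq_of_proj_single_add_proj_single_eq (hcard : 5 ≤ Fintype.card ι) {a b c d : ι}
    (h : proj (Pi.single a 1) + proj (Pi.single b 1) = proj (Pi.single c 1) + proj (Pi.single d 1))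
    (hab : a ≠ b) (hac : a ≠ c) : b = c := by
  obtain ⟨k, -, hk⟩ := exists_mem_notMem_of_card_lt_card (s := {a, b, c, d}) (t := univ)
    (card_le_four.trans_lt (by rwa [card_univ]))
  simp only [mem_insert, mem_singleton, not_or] at hk
  rw [← map_add, ← map_add] at h
  have hwords := eq_of_proj_eq_proj h (k := k) (by simp [hk])
  rw [Pi.single_add_single_eq_single_add_single one_ne_zero one_ne_zero] at hwords
  tauto

theorem direction_injective (hcard : 3 ≤ Fintype.card ι) {f : (ι → ZMod 2) → FoldedCube ι}
    (hf : ∀ x y, f x = f y → proj x = proj y) {x : ι → ZMod 2} {τ : ι → ι}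
    (hτ : ∀ i, f (x + Pi.single i 1) = f x + proj (Pi.single (τ i) 1)) :
    Function.Injective τ := by
  intro i j hij
  have h := hf _ _ ((hτ i).trans (hij ▸ (hτ j).symm))
  rw [map_add, map_add, add_right_inj] at h
  exact proj_single_injective hcard h

theorem direction_add_single (hcard : 5 ≤ Fintype.card ι) {f : (ι → ZMod 2) → FoldedCube ι}
    (hf : ∀ x y, f x = f y → proj x = proj y) {σ : (ι → ZMod 2) → ι → ι}
    (hσ : ∀ x i, f (x + Pi.single i 1) = f x + proj (Pi.single (σ x i) 1))
    (x : ι → ZMod 2) (i : ι) :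
    σ (x + Pi.single i 1) = σ x := by
  have hinj (x) : Function.Injective (σ x) := direction_injective (by lia) hf (hσ x)
  have hback : σ (x + Pi.single i 1) i = σ x i := by
    have h := hσ (x + Pi.single i 1) i
    rw [add_assoc, ZModModule.add_self, add_zero, hσ x i, add_assoc, left_eq_add,
      ← ZModModule.sub_eq_add, sub_eq_zero] at h
    exact proj_single_injective (by lia) h.symm
  ext j
  by_cases hij : j = i
  · rw [hij, hback]
  have hsquare : proj (Pi.single (σ x i) 1) + proj (Pi.single (σ (x + Pi.single i 1) j) 1) =
      proj (Pi.single (σ x j) 1) + proj (Pi.single (σ (x + Pi.single j 1) i) 1) := by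
    rw [← add_right_inj (f x), ← add_assoc, ← add_assoc, ← hσ, ← hσ, ← hσ, ← hσ, add_right_comm]
  refine eq_of_proj_single_add_proj_single_eq hcard hsquare ?_ ((hinj x).ne (Ne.symm hij))
  rw [← hback]
  exact (hinj _).ne (Ne.symm hij)

theorem exists_perm_map_add_single (hcard : 5 ≤ Fintype.card ι) {f : (ι → ZMod 2) → FoldedCube ι}
    (hf : ∀ x y, f x = f y → proj x = proj y)
    (hadj : ∀ x i, ∃ j, f (x + Pi.single i 1) = f x + proj (Pi.single j 1)) :
    ∃ π : Equiv.Perm ι, ∀ x i, f (x + Pi.single i 1) = f x + proj (Pi.single (π i) 1) := by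
  choose σ hσ using hadj
  have hconst (x) : σ x = σ 0 :=
    word_induction (p := fun x => σ x = σ 0) rfl
      (fun x i hx => (direction_add_single hcard hf hσ x i).trans hx) x
  have hinj : Function.Injective (σ 0) := direction_injective (by lia) hf (hσ 0)
  refine ⟨.ofBijective (σ 0) (Finite.injective_iff_bijective.1 hinj), fun x i => ?_⟩
  rw [hσ, hconst, Equiv.ofBijective_apply]

end FoldedCube

open FoldedCube

theorem exists_switching_set_iff {V : Type*} [AddCommGroup V] [Module (ZMod 2) V] {t : V}
    {X : Set V} (hX : ∀ c, c ∈ X ∨ c + t ∈ X) {φ ψ : V → V} (hψ : ∀ c, ψ (c + t) = ψ c + t) :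
    (∃ S ⊆ X, ∀ c, ((({c, c + t} : Set V) ∩ S = ∅ → φ c = ψ c) ∧
      (({c, c + t} : Set V) ∩ S ≠ ∅ → φ c = ψ c + t))) ↔
    (∀ c, φ (c + t) = φ c + t) ∧ ∀ c, φ c = ψ c ∨ φ c = ψ c + t := by
  have hcancel (c : V) : c + t + t = c := by rw [add_assoc, ZModModule.add_self, add_zero]
  constructor
  · rintro ⟨S, -, hS⟩
    have hpair (c : V) : ({c + t, c + t + t} : Set V) = {c, c + t} := by
      rw [hcancel, Set.pair_comm]
    refine ⟨fun c => ?_, fun c => (em _).imp (hS c).1 (hS c).2⟩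
    have hc := hS (c + t)
    rw [hpair, hψ] at hc
    by_cases h : ({c, c + t} : Set V) ∩ S = ∅
    · rw [hc.1 h, (hS c).1 h]
    · rw [hc.2 h, (hS c).2 h]
  · rintro ⟨hφ, hφψ⟩
    have hswitch (c : V) : φ (c + t) = ψ (c + t) + t ↔ φ c = ψ c + t := by
      rw [hφ, hψ, add_left_inj]
    refine ⟨{c ∈ X | φ c = ψ c + t}, Set.sep_subset _ _, fun c => ⟨fun hempty => ?_, fun hne => ?_⟩⟩
    · refine (hφψ c).resolve_right fun hc => ?_
      rcases hX c with hcX | hcX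
      · exact (Set.eq_empty_iff_forall_notMem.1 hempty c) ⟨.inl rfl, hcX, hc⟩
      · exact (Set.eq_empty_iff_forall_notMem.1 hempty (c + t)) ⟨.inr rfl, hcX, (hswitch c).2 hc⟩
    · obtain ⟨s, rfl | rfl, -, hs⟩ := Set.nonempty_iff_ne_empty.2 hne
      · exact hs
      · exact (hswitch c).1 hs

section Classification

variable {ι : Type*} [Fintype ι]

theorem exists_perm_proj_map_eq {φ : Equiv.Perm (ι → ZMod 2)} {m : ℕ} (hm : Odd m)
    (hcard : Fintype.card ι = 2 * m) (hcompl : ∀ x, φ (x + 1) = φ x + 1)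
    (hhalf : ∀ x y, hammingDist x y = m → hammingDist (φ x) (φ y) = m) :
    ∃ π : Equiv.Perm ι, ∀ x, proj (φ x) = proj (φ 0) + proj (x ∘ π) := by
  classical
  have hadj (x i) : ∃ j, proj (φ (x + Pi.single i 1)) = proj (φ x) + proj (Pi.single j 1) :=
    exists_proj_eq_proj_add_single <| hammingDist_map_eq_one_or_add_one_eq hm hcard hhalf <|
      hammingDist_eq_one_iff.2 ⟨i, rfl⟩
  have hinj (x y) (h : proj (φ x) = proj (φ y)) : proj x = proj y := by
    rwa [proj_eq_proj_iff, ← hcompl, φ.injective.eq_iff, φ.injective.eq_iff,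
      ← proj_eq_proj_iff] at h
  obtain ⟨π, hπ⟩ : ∃ π : Equiv.Perm ι,
      ∀ x i, proj (φ (x + Pi.single i 1)) = proj (φ x) + proj (Pi.single (π i) 1) := by
    obtain h2 | h5 : Fintype.card ι = 2 ∨ 5 ≤ Fintype.card ι := by
      obtain ⟨q, rfl⟩ := hm
      lia
    · refine ⟨1, fun x i => ?_⟩
      obtain ⟨j, hj⟩ := hadj x i
      rw [hj, proj_single_eq_proj_single_of_card_eq_two h2 j i, Equiv.Perm.one_apply]
    · exact exists_perm_map_add_single h5 hinj hadj
  exact ⟨π.symm, eq_add_proj_comp_symm hπ⟩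

theorem hammingDist_map_eq_half_of_proj_map_eq {m : ℕ} (hcard : Fintype.card ι = 2 * m)
    {φ : (ι → ZMod 2) → ι → ZMod 2} {π : Equiv.Perm ι}
    (hπ : ∀ x, proj (φ x) = proj (φ 0) + proj (x ∘ π)) {x y : ι → ZMod 2}
    (h : hammingDist x y = m) :
    hammingDist (φ x) (φ y) = m := by
  have htranslate : hammingDist (φ 0 + x ∘ π) (φ 0 + y ∘ π) = hammingDist (x ∘ π) (y ∘ π) :=
    hammingDist_comp (fun i => (φ 0 i + ·)) fun _ => add_right_injective _
  refine hammingDist_eq_half_of_proj_eq_proj hcard ((hπ x).trans (map_add ..).symm)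
    ((hπ y).trans (map_add ..).symm) ?_
  rw [htranslate, hammingDist_comp_perm, h]

theorem half_isometry_iff {φ : Equiv.Perm (ι → ZMod 2)} {m : ℕ} (hm : Odd m)
    (hcard : Fintype.card ι = 2 * m) :
    (∀ x y, (hammingDist x y = m ∨ hammingDist x y = Fintype.card ι) →
      hammingDist (φ x) (φ y) = hammingDist x y) ↔
    ∃ π : Equiv.Perm ι, (∀ x, φ (x + 1) = φ x + 1) ∧
      ∀ x, proj (φ x) = proj (φ 0) + proj (x ∘ π) := by
  constructor
  · intro h
    have hcompl : ∀ x, φ (x + 1) = φ x + 1 :=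
      preserves_hammingDist_card_iff.1 fun x y hxy => (h x y (.inr hxy)).trans hxy
    obtain ⟨π, hπ⟩ := exists_perm_proj_map_eq hm hcard hcompl
      fun x y hxy => (h x y (.inl hxy)).trans hxy
    exact ⟨π, hcompl, hπ⟩
  · rintro ⟨π, hcompl, hπ⟩ x y (hxy | hxy)
    · rw [hxy, hammingDist_map_eq_half_of_proj_map_eq hcard hπ hxy]
    · rw [hxy, preserves_hammingDist_card_iff.2 hcompl x y hxy]

/-- The words of weight less than `m`, and those of weight `m` whose coordinate `i` is `0`. When
there are `2m` coordinates, this set consists of one word from each complementary pair. -/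
def lowerHalf (m : ℕ) (i : ι) : Set (ι → ZMod 2) :=
  {c | hammingNorm c < m ∨ (hammingNorm c = m ∧ c i = 0)}

theorem mem_lowerHalf_or_add_one_mem_lowerHalf {m : ℕ} (hcard : Fintype.card ι = 2 * m) (i : ι)
    (c : ι → ZMod 2) : c ∈ lowerHalf m i ∨ c + 1 ∈ lowerHalf m i := by
  have hnorm := hammingDist_add_one_add_hammingDist 0 c
  simp only [hammingDist_zero_left] at hnorm
  have hi : c i = 0 ∨ (c + 1) i = 0 := by
    rw [Pi.add_apply, Pi.one_apply]
    generalize c i = a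
    decide +revert
  simp only [lowerHalf, Set.mem_ofPred_eq]
  lia

end Classification

/-- For `n ≡ 2 (mod 4)`, a bijection of the Boolean cube `C_n` stabilizing `{0̄, 1̄}` is an
`{n/2, n}`-isometry if and only if there are a coordinate permutation `π` and a subset `S`
of `X` (the words of weight `< n/2` together with those of weight `n/2` whose first
coordinate is `0`) such that `φ c = π c` when `{c, c+1̄}` misses `S` and `φ c = π c + 1̄`
when `{c, c+1̄}` meets `S`. -/
theorem halfIsometry_classification_of_two_mod_four (n : ℕ) (hn : n % 4 = 2)
    (φ : (Fin n → ZMod 2) → Fin n → ZMod 2) (hbij : Function.Bijective φ)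
    (hstab : φ '' {0, 1} = {0, 1}) :
    (∀ x y, (hammingDist x y = n / 2 ∨ hammingDist x y = n) →
      hammingDist (φ x) (φ y) = hammingDist x y) ↔
    (∃ (π : Equiv.Perm (Fin n)) (S : Set (Fin n → ZMod 2)),
      S ⊆ {c | hammingNorm c < n / 2 ∨
        (hammingNorm c = n / 2 ∧ c ⟨0, by omega⟩ = 0)} ∧
      ∀ c, (({c, c + 1} : Set (Fin n → ZMod 2)) ∩ S = ∅ →
              φ c = fun k => c (π k)) ∧
        (({c, c + 1} : Set (Fin n → ZMod 2)) ∩ S ≠ ∅ →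
              φ c = (fun k => c (π k)) + 1)) := by
  have hcard : Fintype.card (Fin n) = 2 * (n / 2) := by
    rw [Fintype.card_fin]
    lia
  have hodd : Odd (n / 2) := Nat.odd_iff.2 (by lia)
  obtain ⟨φ, rfl⟩ : ∃ e : Equiv.Perm (Fin n → ZMod 2), ⇑e = φ := ⟨.ofBijective φ hbij, rfl⟩
  have hzero : proj (φ 0) = 0 := by
    rw [← map_zero proj, proj_eq_proj_iff, zero_add]
    simpa using hstab.subset (Set.mem_image_of_mem φ (.inl rfl))
  have hiff := half_isometry_iff (φ := φ) hodd hcard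
  simp only [Fintype.card_fin, hzero, zero_add, proj_eq_proj_iff] at hiff
  exact hiff.trans <| exists_congr fun π => .symm <| exists_switching_set_iff
    (mem_lowerHalf_or_add_one_mem_lowerHalf hcard ⟨0, by lia⟩) fun _ => rfl
end

section
/- Suppose 4 divides n. Let φ be a bijection of C_n that stabilizes the set {0̄, 1̄}. Then φ is an {n/2, n}-isometry if and only if there exist permutations π_1 and π_2 of {1,...,n}, subsets S_1 and S_2 of E_X, and odd-weight words a and b such that: for every even-weight word c, φ(c) = π_1(c) if {c, c + 1̄} ∩ S_1 = ∅ and φ(c) = π_1(c) + 1̄ otherwise; and for every odd-weight word c, φ(c) = b + π_2(c + a) if {c + a, c + a + 1̄} ∩ S_2 = ∅ and φ(c) = b + π_2(c + a) + 1̄ otherwise. -/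
/-!
Words at distance `2j` have exactly `centralBinom j * centralBinom (n/2 - j)` common neighbours at
distance `n/2`, and words at odd distance have none. This product is strictly decreasing for
`j ≤ n/4`, so a bijective `{n/2, n}`-isometry preserves the parity of the distance and, for words
of equal parity, the folded distance `min d (n - d)`.

Fix a position `i`. The words `eᵢ + eⱼ` are at pairwise distance two, so up to complementation
their images are again words of weight two whose supports pairwise intersect; being numerous,
they share a point, and the images form a star `e_{σ i} + e_{σ j}`. (For `n = 4` every
complementary pair of words of weight two contains a word through any prescribed point.) Since
`4 ∣ n`, the star determines the image of an even word `c` up to complement, because `c` and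
`c + eᵢ + eⱼ` have the same folded norm exactly when `cᵢ ≠ cⱼ`. The complementation choices are
constant on the pairs `{c, c + 1̄}` and are recorded by a set of representatives. Odd words reduce
to even ones by translating.
-/

namespace BooleanCube

open Finset

section CentralBinom

open Nat (centralBinom)

theorem centralBinom_succ_mul_lt {j k : ℕ} (h : j < k) :
    centralBinom (j + 1) * centralBinom k < centralBinom j * centralBinom (k + 1) := by
  have hj := Nat.succ_mul_centralBinom_succ j
  have hk := Nat.succ_mul_centralBinom_succ k
  have hpos := Nat.mul_pos j.centralBinom_pos k.centralBinom_pos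
  refine lt_of_mul_lt_mul_left (a := (j + 1) * (k + 1)) ?_ (Nat.zero_le _)
  calc (j + 1) * (k + 1) * (centralBinom (j + 1) * centralBinom k)
      = ((j + 1) * centralBinom (j + 1)) * ((k + 1) * centralBinom k) := by ring
    _ = (2 * (2 * j + 1) * (k + 1)) * (centralBinom j * centralBinom k) := by rw [hj]; ring
    _ < (2 * (2 * k + 1) * (j + 1)) * (centralBinom j * centralBinom k) :=
        Nat.mul_lt_mul_of_pos_right (by nlinarith) hpos
    _ = ((j + 1) * centralBinom j) * ((k + 1) * centralBinom (k + 1)) := by rw [hk]; ring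
    _ = (j + 1) * (k + 1) * (centralBinom j * centralBinom (k + 1)) := by ring

theorem strictAntiOn_centralBinom_mul_centralBinom_sub (N : ℕ) :
    StrictAntiOn (fun i ↦ centralBinom i * centralBinom (N - i)) {i | 2 * i ≤ N} := by
  have hconn : Set.OrdConnected {i : ℕ | 2 * i ≤ N} :=
    ⟨fun _ _ j (hj : 2 * j ≤ N) k hk ↦ show 2 * k ≤ N by have := hk.2; omega⟩
  refine strictAntiOn_of_add_one_lt hconn fun i _ _ (hi : 2 * (i + 1) ≤ N) ↦ ?_
  have hsub : N - (i + 1) + 1 = N - i := by omega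
  simpa only [hsub] using centralBinom_succ_mul_lt (show i < N - (i + 1) by omega)

theorem min_sub_eq_of_centralBinom_mul_eq {N i j : ℕ} (hi : i ≤ N) (hj : j ≤ N)
    (h : centralBinom i * centralBinom (N - i) = centralBinom j * centralBinom (N - j)) :
    min i (N - i) = min j (N - j) := by
  have hsymm : ∀ k ≤ N, centralBinom (min k (N - k)) * centralBinom (N - min k (N - k)) =
      centralBinom k * centralBinom (N - k) := fun k hk ↦ by
    rcases le_total k (N - k) with hle | hle
    · rw [min_eq_left hle]
    · rw [min_eq_right hle, Nat.sub_sub_self hk, mul_comm]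
  refine (strictAntiOn_centralBinom_mul_centralBinom_sub N).injOn
    (show 2 * min i (N - i) ≤ N by omega) (show 2 * min j (N - j) ≤ N by omega) ?_
  simp only [hsymm i hi, hsymm j hj, h]

end CentralBinom

section FinsetFamily

variable {α : Type*} [DecidableEq α]

theorem card_symmDiff_add (s t : Finset α) : #(symmDiff s t) + 2 * #(s ∩ t) = #s + #t := by
  have hs := card_sdiff_add_card_inter s t
  have ht := card_sdiff_add_card_inter t s
  have hst : #(symmDiff s t) = #(s \ t) + #(t \ s) :=
    card_union_of_disjoint disjoint_sdiff_sdiff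
  rw [inter_comm] at ht
  omega

theorem card_filter_card_inter_card_sdiff [Fintype α] (u : Finset α) (p q : ℕ) :
    #{z : Finset α | #(z ∩ u) = p ∧ #(z \ u) = q} = (#u).choose p * (#uᶜ).choose q := by
  rw [← card_powersetCard, ← card_powersetCard, ← card_product]
  refine card_nbij' (fun z ↦ (z ∩ u, z \ u)) (fun r ↦ r.1 ∪ r.2) ?_ ?_ ?_ ?_
  · intro z hz
    simp_all [subset_iff]
  · rintro ⟨s, t⟩ h
    simp only [coe_product, Set.mem_prod, mem_coe, mem_powersetCard] at h
    obtain ⟨⟨hs, rfl⟩, ht, rfl⟩ := h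
    have hinter : (s ∪ t) ∩ u = s := by grind [mem_compl]
    have hsdiff : (s ∪ t) \ u = t := by grind [mem_compl]
    simp [hinter, hsdiff]
  · intro z _
    exact sup_inf_sdiff z u
  · rintro ⟨s, t⟩ h
    simp only [coe_product, Set.mem_prod, mem_coe, mem_powersetCard] at h
    ext <;> grind [mem_compl]

theorem exists_forall_mem_of_intersecting {𝓕 : Finset (Finset α)}
    (hsized : (𝓕 : Set (Finset α)).Sized 2) (hinter : (𝓕 : Set (Finset α)).Intersecting)
    (hcard : 4 ≤ #𝓕) : ∃ a, ∀ s ∈ 𝓕, a ∈ s := by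
  by_contra! hcommon
  have hmeet : ∀ s ∈ 𝓕, ∀ t ∈ 𝓕, ∃ x ∈ s, x ∈ t := fun s hs t ht ↦
    not_disjoint_iff.mp (hinter hs ht)
  obtain ⟨s, hs, t, ht, hst⟩ := one_lt_card.mp (show 1 < #𝓕 by omega)
  obtain ⟨a, has, hat⟩ := hmeet s hs t ht
  have hpair : ∀ v ∈ 𝓕, ∀ x ∈ v, ∀ y ∈ v, x ≠ y → v = {x, y} := fun v hv x hx y hy hxy ↦
    (eq_of_subset_of_card_le (by grind) (by rw [hsized hv, card_pair hxy])).symm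
  obtain ⟨b, hbs, hba⟩ := exists_mem_ne (by rw [hsized hs]; exact one_lt_two) a
  obtain ⟨c, hct, hca⟩ := exists_mem_ne (by rw [hsized ht]; exact one_lt_two) a
  have hs_eq : s = {a, b} := hpair s hs a has b hbs hba.symm
  have ht_eq : t = {a, c} := hpair t ht a hat c hct hca.symm
  obtain ⟨u, hu, hau⟩ := hcommon a
  have hu_eq : u = {b, c} := by
    have hsu := hmeet s hs u hu
    have htu := hmeet t ht u hu
    exact hpair u hu b (by grind) c (by grind) (by grind)
  have htriangle : 𝓕 ⊆ {{a, b}, {a, c}, {b, c}} := fun v hv ↦ by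
    have hsv := hmeet s hs v hv
    have htv := hmeet t ht v hv
    have huv := hmeet u hu v hv
    have hv_pair := hpair v hv
    grind
  exact absurd ((card_le_card htriangle).trans card_le_three) (by omega)

end FinsetFamily

theorem rel_map_iff_of_injective {α : Type*} [Finite α] {f : α → α} (hf : f.Injective)
    {r : α → α → Prop} (h : ∀ x y, r x y → r (f x) (f y)) (x y : α) :
    r (f x) (f y) ↔ r x y := by
  refine ⟨fun hxy ↦ ?_, h x y⟩
  have hmaps : Set.MapsTo (Prod.map f f) {p | r p.1 p.2} {p | r p.1 p.2} := fun p ↦ h p.1 p.2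
  have hbij := ((Set.toFinite _).injOn_iff_bijOn_of_mapsTo hmaps).mp (hf.prodMap hf).injOn
  obtain ⟨p, hp, hpxy⟩ := hbij.surjOn (show (f x, f y) ∈ {p : α × α | r p.1 p.2} from hxy)
  obtain rfl : p = (x, y) := hf.prodMap hf hpxy
  exact hp

section Weight

variable {ι : Type*} [Fintype ι]

section Support

variable [DecidableEq ι]

/-- The support of a binary word, as a finset; its cardinality is the weight `hammingNorm`. The
equivalence turns words into sets of positions, addition into symmetric difference. -/
def supportEquiv : (ι → ZMod 2) ≃ Finset ι where
  toFun x := {i | x i ≠ 0}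
  invFun s i := if i ∈ s then 1 else 0
  left_inv x := by
    funext i
    have hbit : ∀ a : ZMod 2, (if a ≠ 0 then 1 else 0) = a := by decide
    simpa using hbit (x i)
  right_inv s := by ext; simp

theorem mem_supportEquiv {x : ι → ZMod 2} {i : ι} : i ∈ supportEquiv x ↔ x i ≠ 0 := by
  simp [supportEquiv]

theorem card_supportEquiv (x : ι → ZMod 2) : #(supportEquiv x) = hammingNorm x := rfl

theorem supportEquiv_add (x y : ι → ZMod 2) :
    supportEquiv (x + y) = symmDiff (supportEquiv x) (supportEquiv y) := by
  have hbit : ∀ a b : ZMod 2, a + b ≠ 0 ↔ a ≠ 0 ∧ ¬b ≠ 0 ∨ b ≠ 0 ∧ ¬a ≠ 0 := by decide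
  ext i
  simp only [mem_symmDiff, mem_supportEquiv, Pi.add_apply, hbit]

theorem hammingNorm_add (x y : ι → ZMod 2) :
    hammingNorm (x + y) + 2 * #(supportEquiv x ∩ supportEquiv y) =
      hammingNorm x + hammingNorm y := by
  simp only [← card_supportEquiv, supportEquiv_add, card_symmDiff_add]

end Support

theorem hammingDist_eq_hammingNorm_add (x y : ι → ZMod 2) :
    hammingDist x y = hammingNorm (x + y) := by
  rw [hammingDist_eq_hammingNorm, ZModModule.neg_eq_self]

theorem even_hammingNorm_add_iff {x y : ι → ZMod 2} :
    Even (hammingNorm (x + y)) ↔ (Even (hammingNorm x) ↔ Even (hammingNorm y)) := by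
  classical
  rw [← Nat.even_add, ← hammingNorm_add, Nat.even_add]
  simp

theorem hammingNorm_one : hammingNorm (1 : ι → ZMod 2) = Fintype.card ι := by
  simp [hammingNorm]

theorem hammingNorm_add_one (x : ι → ZMod 2) :
    hammingNorm (x + 1) + hammingNorm x = Fintype.card ι := by
  classical
  have hsupp : supportEquiv (1 : ι → ZMod 2) = univ := by ext; simp [mem_supportEquiv]
  have h := hammingNorm_add x 1
  rw [hsupp, inter_univ, card_supportEquiv, hammingNorm_one] at h
  omega

theorem hammingNorm_eq_card_iff {x : ι → ZMod 2} : hammingNorm x = Fintype.card ι ↔ x = 1 := by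
  refine ⟨fun h ↦ ?_, fun h ↦ h ▸ hammingNorm_one⟩
  have hzero : x + 1 = 0 := hammingNorm_eq_zero.mp (by have := hammingNorm_add_one x; omega)
  rwa [add_eq_zero_iff_eq_neg, ZModModule.neg_eq_self] at hzero

theorem hammingDist_eq_card_iff {x y : ι → ZMod 2} :
    hammingDist x y = Fintype.card ι ↔ y = x + 1 := by
  rw [hammingDist_eq_hammingNorm_add, hammingNorm_eq_card_iff, ← eq_sub_iff_add_eq',
    ZModModule.sub_eq_add, add_comm]

theorem hammingNorm_comp_perm (x : ι → ZMod 2) (π : Equiv.Perm ι) :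
    hammingNorm (x ∘ π) = hammingNorm x :=
  card_equiv π (by simp)

theorem hammingNorm_single_one [DecidableEq ι] (i : ι) :
    hammingNorm (Pi.single i 1 : ι → ZMod 2) = 1 := by
  simp [hammingNorm, Pi.single_apply, filter_eq']

end Weight

section Folded

variable {ι : Type*}

/-- Two words are equal or complementary, i.e. they represent the same vertex of the folded
cube, the quotient of the Boolean cube by `x ↦ x + 1̄`. -/
def EqOrCompl (x y : ι → ZMod 2) : Prop :=
  x = y ∨ x = y + 1

theorem add_one_add_one (x : ι → ZMod 2) : x + 1 + 1 = x := by
  rw [add_assoc, ZModModule.add_self, add_zero]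

theorem EqOrCompl.add {x x' y y' : ι → ZMod 2} (hx : EqOrCompl x x') (hy : EqOrCompl y y') :
    EqOrCompl (x + y) (x' + y') := by
  rcases hx with rfl | rfl <;> rcases hy with rfl | rfl
  · exact .inl rfl
  · exact .inr (add_assoc _ _ _).symm
  · exact .inr (add_right_comm _ _ _)
  · exact .inl (by rw [add_add_add_comm, ZModModule.add_self, add_zero])

variable [Fintype ι]

/-- The distance to `0` in the folded cube; the folded distance of `x` and `y` is
`foldedNorm (x + y)`. -/
def foldedNorm (x : ι → ZMod 2) : ℕ :=
  min (hammingNorm x) (Fintype.card ι - hammingNorm x)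

theorem foldedNorm_add_one (x : ι → ZMod 2) : foldedNorm (x + 1) = foldedNorm x := by
  have := hammingNorm_add_one x
  unfold foldedNorm
  omega

theorem foldedNorm_zero : foldedNorm (0 : ι → ZMod 2) = 0 := by
  simp [foldedNorm]

theorem EqOrCompl.foldedNorm_eq {x y : ι → ZMod 2} (h : EqOrCompl x y) :
    foldedNorm x = foldedNorm y := by
  rcases h with rfl | rfl
  · rfl
  · exact foldedNorm_add_one y

theorem exists_eqOrCompl_hammingNorm_eq {x : ι → ZMod 2} {k : ℕ} (h : foldedNorm x = k) :
    ∃ y, EqOrCompl x y ∧ hammingNorm y = k := by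
  have hcompl := hammingNorm_add_one x
  by_cases hx : hammingNorm x = k
  · exact ⟨x, .inl rfl, hx⟩
  · exact ⟨x + 1, .inr (add_one_add_one x).symm, by unfold foldedNorm at h; omega⟩

theorem even_hammingNorm_iff_of_foldedNorm_eq (hn : Even (Fintype.card ι)) {x y : ι → ZMod 2}
    (h : foldedNorm x = foldedNorm y) : Even (hammingNorm x) ↔ Even (hammingNorm y) := by
  have hx := hammingNorm_add_one x
  have hy := hammingNorm_add_one y
  unfold foldedNorm at h
  grind

theorem hammingNorm_eq_half_iff (hn : Even (Fintype.card ι)) {x : ι → ZMod 2} :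
    hammingNorm x = Fintype.card ι / 2 ↔ foldedNorm x = Fintype.card ι / 2 := by
  have := hammingNorm_add_one x
  unfold foldedNorm
  grind

end Folded

section PairWord

variable {ι : Type*} [DecidableEq ι]

/-- The word `eᵢ + eⱼ`. It has weight two when `i ≠ j` and is zero when `i = j`. -/
def pairWord (i j : ι) : ι → ZMod 2 :=
  Pi.single i 1 + Pi.single j 1

theorem pairWord_self (i : ι) : pairWord i i = 0 :=
  ZModModule.add_self _

theorem pairWord_add_pairWord (i j k : ι) : pairWord i j + pairWord i k = pairWord j k := by
  rw [pairWord, pairWord, pairWord, add_comm (Pi.single i 1), ZModModule.add_add_add_cancel]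

variable [Fintype ι]

theorem supportEquiv_pairWord {i j : ι} (h : i ≠ j) : supportEquiv (pairWord i j) = {i, j} := by
  ext k
  simp only [mem_supportEquiv, pairWord, Pi.add_apply, Pi.single_apply, mem_insert, mem_singleton]
  split_ifs <;> simp_all

theorem hammingNorm_pairWord {i j : ι} (h : i ≠ j) : hammingNorm (pairWord i j) = 2 := by
  rw [← card_supportEquiv, supportEquiv_pairWord h, card_pair h]

theorem even_hammingNorm_pairWord (i j : ι) : Even (hammingNorm (pairWord i j)) := by
  simp [pairWord, even_hammingNorm_add_iff, hammingNorm_single_one]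

theorem foldedNorm_pairWord {i j : ι} (h : i ≠ j) :
    foldedNorm (pairWord i j) = min 2 (Fintype.card ι - 2) := by
  rw [foldedNorm, hammingNorm_pairWord h]

theorem exists_eq_pairWord {x : ι → ZMod 2} (hx : hammingNorm x = 2) {a : ι} (ha : x a ≠ 0) :
    ∃ b, x = pairWord a b := by
  obtain ⟨b, hb⟩ : ∃ b, (supportEquiv x).erase a = {b} := by
    rw [← card_eq_one, card_erase_of_mem (mem_supportEquiv.mpr ha), card_supportEquiv, hx]
  have hba : a ≠ b := (ne_of_mem_erase (hb ▸ mem_singleton_self b)).symm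
  refine ⟨b, supportEquiv.injective ?_⟩
  rw [supportEquiv_pairWord hba, ← hb, insert_erase (mem_supportEquiv.mpr ha)]

theorem hammingNorm_add_pairWord {i j : ι} (h : i ≠ j) (x : ι → ZMod 2) :
    hammingNorm (x + pairWord i j) + 2 * ((if x i ≠ 0 then 1 else 0) + if x j ≠ 0 then 1 else 0) =
      hammingNorm x + 2 := by
  have hsupp : supportEquiv x ∩ {i, j} = {k ∈ ({i, j} : Finset ι) | x k ≠ 0} := by
    ext; simp [mem_supportEquiv, and_comm]
  rw [← sum_pair h (f := fun k ↦ if x k ≠ 0 then 1 else 0), ← card_filter, ← hsupp,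
    ← supportEquiv_pairWord h, hammingNorm_add, hammingNorm_pairWord h]

theorem foldedNorm_add_pairWord_eq_iff (hn : 4 ∣ Fintype.card ι) {x : ι → ZMod 2}
    (hx : Even (hammingNorm x)) {i j : ι} (h : i ≠ j) :
    foldedNorm (x + pairWord i j) = foldedNorm x ↔ x i ≠ x j := by
  have hbits : ∀ a b : ZMod 2, a ≠ b ∧ (if a ≠ 0 then 1 else 0) + (if b ≠ 0 then 1 else 0) = 1 ∨
      a = b ∧ ((if a ≠ 0 then 1 else 0) + (if b ≠ 0 then 1 else 0) = 0 ∨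
        (if a ≠ 0 then 1 else 0) + (if b ≠ 0 then 1 else 0) = 2) := by decide
  have hadd := hammingNorm_add_pairWord h x
  have hcompl := hammingNorm_add_one x
  have hcompl' := hammingNorm_add_one (x + pairWord i j)
  rw [Nat.even_iff] at hx
  unfold foldedNorm
  rcases hbits (x i) (x j) with ⟨hne, hone⟩ | ⟨heq, hcount⟩
  · exact iff_of_true (by omega) hne
  · exact iff_of_false (by omega) (not_not.mpr heq)

end PairWord

section CommonHalfNeighbors

variable {ι : Type*} [Fintype ι] [DecidableEq ι]

/-- The common neighbours of two words in the graph joining words at distance `n / 2`. -/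
def commonHalfNeighbors (x y : ι → ZMod 2) : Finset (ι → ZMod 2) :=
  {z | hammingDist x z = Fintype.card ι / 2 ∧ hammingDist y z = Fintype.card ι / 2}

theorem card_commonHalfNeighbors_of_hammingDist_eq (hn : Even (Fintype.card ι))
    {x y : ι → ZMod 2} {j : ℕ} (h : hammingDist x y = 2 * j) :
    #(commonHalfNeighbors x y) = j.centralBinom * (Fintype.card ι / 2 - j).centralBinom := by
  set u := supportEquiv (x + y)
  have hu : #u = 2 * j := by rw [card_supportEquiv, ← hammingDist_eq_hammingNorm_add, h]
  have huc : #uᶜ = 2 * (Fintype.card ι / 2 - j) := by rw [card_compl]; grind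
  have hj : j ≤ Fintype.card ι / 2 := by have := card_le_univ u; omega
  rw [Nat.centralBinom, Nat.centralBinom, ← hu, ← huc, ← card_filter_card_inter_card_sdiff]
  refine card_equiv ((Equiv.addLeft x).trans supportEquiv) fun z ↦ ?_
  set s := supportEquiv (x + z) with hs
  have hyz : supportEquiv (y + z) = symmDiff u s := by
    rw [← supportEquiv_add, add_comm x y, ZModModule.add_add_add_cancel]
  have hinter := card_inter_add_card_sdiff s u
  have hsymm := card_symmDiff_add u s
  simp only [commonHalfNeighbors, mem_filter_univ, hammingDist_eq_hammingNorm_add,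
    ← card_supportEquiv, hyz, ← hs, Equiv.trans_apply, Equiv.coe_addLeft]
  rw [inter_comm] at hsymm
  omega

theorem card_commonHalfNeighbors_pos_iff (hn : Even (Fintype.card ι)) {x y : ι → ZMod 2} :
    0 < #(commonHalfNeighbors x y) ↔ Even (hammingDist x y) := by
  refine ⟨fun hpos ↦ ?_, fun h ↦ ?_⟩
  · obtain ⟨z, hz⟩ := card_pos.mp hpos
    obtain ⟨hxz, hyz⟩ := mem_filter_univ z |>.mp hz
    rw [hammingDist_eq_hammingNorm_add] at hxz hyz ⊢
    rw [← ZModModule.add_add_add_cancel x z y, add_comm z y, even_hammingNorm_add_iff, hxz, hyz]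
  · obtain ⟨j, hj⟩ := even_iff_two_dvd.mp h
    rw [card_commonHalfNeighbors_of_hammingDist_eq hn hj]
    exact Nat.mul_pos (Nat.centralBinom_pos _) (Nat.centralBinom_pos _)

theorem foldedNorm_add_eq_of_card_commonHalfNeighbors_eq (hn : Even (Fintype.card ι))
    {x y x' y' : ι → ZMod 2} (h : Even (hammingNorm (x + y)))
    (hcard : #(commonHalfNeighbors x' y') = #(commonHalfNeighbors x y)) :
    foldedNorm (x' + y') = foldedNorm (x + y) := by
  simp only [← hammingDist_eq_hammingNorm_add, foldedNorm] at h ⊢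
  have h' : Even (hammingDist x' y') := by
    rwa [← card_commonHalfNeighbors_pos_iff hn, hcard, card_commonHalfNeighbors_pos_iff hn]
  have hle : ∀ z w : ι → ZMod 2, hammingDist z w ≤ Fintype.card ι := fun _ _ ↦
    hammingDist_le_card_fintype
  obtain ⟨i, hi⟩ := even_iff_two_dvd.mp h
  obtain ⟨j, hj⟩ := even_iff_two_dvd.mp h'
  rw [card_commonHalfNeighbors_of_hammingDist_eq hn hi,
    card_commonHalfNeighbors_of_hammingDist_eq hn hj] at hcard
  have hmin := min_sub_eq_of_centralBinom_mul_eq (by have := hle x' y'; omega)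
    (by have := hle x y; omega) hcard
  grind

end CommonHalfNeighbors

section PIsometry

variable {ι : Type*} [Fintype ι]

/-- The distance condition defining a `P`-isometry of the Boolean cube; bijectivity is kept as a
separate hypothesis. -/
def IsPIsometry (P : Set ℕ) (φ : (ι → ZMod 2) → ι → ZMod 2) : Prop :=
  ∀ x y, hammingDist x y ∈ P → hammingDist (φ x) (φ y) = hammingDist x y

variable {P : Set ℕ} {φ ψ₀ ψ₁ : (ι → ZMod 2) → ι → ZMod 2}

theorem IsPIsometry.translate (h : IsPIsometry P φ) (a b : ι → ZMod 2) :
    IsPIsometry P fun c ↦ b + φ (c + a) := by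
  intro x y hxy
  have hb := hammingDist_comp (fun i ↦ (b i + ·)) (x := φ (x + a)) (y := φ (y + a))
    fun i ↦ add_right_injective (b i)
  have ha := hammingDist_comp (fun i ↦ (· + a i)) (x := x) (y := y) fun i ↦ add_left_injective (a i)
  exact hb.trans ((h _ _ (ha.symm ▸ hxy)).trans ha)

theorem isPIsometry_of_eq_on_even_of_eq_on_odd (hP : ∀ d ∈ P, Even d)
    (h₀ : IsPIsometry P ψ₀) (h₁ : IsPIsometry P ψ₁)
    (heven : ∀ c, Even (hammingNorm c) → φ c = ψ₀ c)
    (hodd : ∀ c, Odd (hammingNorm c) → φ c = ψ₁ c) : IsPIsometry P φ := by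
  intro x y hxy
  have hparity := hP _ hxy
  rw [hammingDist_eq_hammingNorm_add, even_hammingNorm_add_iff] at hparity
  by_cases hx : Even (hammingNorm x)
  · rw [heven x hx, heven y (hparity.mp hx), h₀ x y hxy]
  · rw [hodd x (Nat.not_even_iff_odd.mp hx), hodd y (Nat.not_even_iff_odd.mp (hx <| hparity.mpr ·)),
      h₁ x y hxy]

theorem IsPIsometry.map_add_one (h : IsPIsometry P φ) (hP : Fintype.card ι ∈ P)
    (c : ι → ZMod 2) : φ (c + 1) = φ c + 1 := by
  have hdist : hammingDist c (c + 1) = Fintype.card ι := hammingDist_eq_card_iff.mpr rfl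
  rw [← hammingDist_eq_card_iff, h c (c + 1) (hdist ▸ hP), hdist]

theorem IsPIsometry.card_commonHalfNeighbors_map [DecidableEq ι] (h : IsPIsometry P φ)
    (hφ : φ.Injective) (hP : Fintype.card ι / 2 ∈ P) (x y : ι → ZMod 2) :
    #(commonHalfNeighbors (φ x) (φ y)) = #(commonHalfNeighbors x y) := by
  have hdist := rel_map_iff_of_injective hφ (r := (hammingDist · · = Fintype.card ι / 2))
    fun x y hxy ↦ (h x y (hxy ▸ hP)).trans hxy
  refine (card_equiv (.ofBijective φ (Finite.injective_iff_bijective.mp hφ)) fun z ↦ ?_).symm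
  simp [commonHalfNeighbors, hdist]

theorem IsPIsometry.even_hammingNorm_map_add_iff (h : IsPIsometry P φ) (hφ : φ.Injective)
    (hP : Fintype.card ι / 2 ∈ P) (hn : Even (Fintype.card ι)) (x y : ι → ZMod 2) :
    Even (hammingNorm (φ x + φ y)) ↔ Even (hammingNorm (x + y)) := by
  classical
  simp only [← hammingDist_eq_hammingNorm_add, ← card_commonHalfNeighbors_pos_iff hn,
    h.card_commonHalfNeighbors_map hφ hP]

theorem IsPIsometry.foldedNorm_map_add (h : IsPIsometry P φ) (hφ : φ.Injective)
    (hP : Fintype.card ι / 2 ∈ P) (hn : Even (Fintype.card ι)) {x y : ι → ZMod 2}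
    (hxy : Even (hammingNorm (x + y))) : foldedNorm (φ x + φ y) = foldedNorm (x + y) := by
  classical
  exact foldedNorm_add_eq_of_card_commonHalfNeighbors_eq hn hxy
    (h.card_commonHalfNeighbors_map hφ hP x y)

end PIsometry

section PairWordFamily

variable {ι : Type*} [Fintype ι]

theorem exists_eqOrCompl_pairWord_of_card_eq_four [DecidableEq ι] (hn : Fintype.card ι = 4)
    {x : ι → ZMod 2} (hx : foldedNorm x = 2) (a : ι) : ∃ b, EqOrCompl x (pairWord a b) := by
  obtain ⟨y, hxy, hy⟩ := exists_eqOrCompl_hammingNorm_eq hx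
  by_cases ha : y a = 0
  · have hcompl : hammingNorm (y + 1) = 2 := by have := hammingNorm_add_one y; omega
    obtain ⟨b, hb⟩ := exists_eq_pairWord hcompl (a := a) (by simp [ha])
    refine ⟨b, hb ▸ ?_⟩
    simpa [EqOrCompl, add_one_add_one, or_comm] using hxy
  · obtain ⟨b, rfl⟩ := exists_eq_pairWord hy ha
    exact ⟨b, hxy⟩

theorem exists_common_coordinate_of_foldedNorm_add_eq_two (hn : 6 < Fintype.card ι) {i : ι}
    {y : ι → ι → ZMod 2} (hy : ∀ j ≠ i, hammingNorm (y j) = 2)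
    (hadd : ∀ j ≠ i, ∀ k ≠ i, j ≠ k → foldedNorm (y j + y k) = 2) :
    ∃ a, ∀ j ≠ i, y j a ≠ 0 := by
  classical
  have hinj : Set.InjOn (fun j ↦ supportEquiv (y j)) (univ.erase i : Finset ι) := by
    intro j hj k hk hjk
    by_contra hne
    have h := hadd j (ne_of_mem_erase hj) k (ne_of_mem_erase hk) hne
    rw [supportEquiv.injective hjk, ZModModule.add_self, foldedNorm_zero] at h
    exact two_ne_zero h.symm
  have hmeet : ∀ j ≠ i, ∀ k ≠ i, ¬Disjoint (supportEquiv (y j)) (supportEquiv (y k)) := by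
    intro j hj k hk hdisj
    have hnorm := hammingNorm_add (y j) (y k)
    rw [disjoint_iff_inter_eq_empty.mp hdisj, card_empty, hy j hj, hy k hk] at hnorm
    by_cases hjk : j = k
    · simp [hjk, ZModModule.add_self] at hnorm
    · have h := hadd j hj k hk hjk
      unfold foldedNorm at h
      omega
  obtain ⟨a, ha⟩ := exists_forall_mem_of_intersecting
    (𝓕 := (univ.erase i).image fun j ↦ supportEquiv (y j))
    (by simpa [Set.Sized, card_supportEquiv] using hy)
    (by simpa [Set.Intersecting] using hmeet)
    (by rw [card_image_of_injOn hinj, card_erase_of_mem (mem_univ i), card_univ]; omega)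
  exact ⟨a, fun j hj ↦ mem_supportEquiv.mp
    (ha _ (mem_image_of_mem _ (mem_erase.mpr ⟨hj, mem_univ j⟩)))⟩

end PairWordFamily

section EvenFoldedIsometry

variable {ι : Type*} [Fintype ι]

/-- On even-weight words, `φ` induces an isometry of the folded cube that fixes the vertex
`{0̄, 1̄}`. -/
structure IsEvenFoldedIsometry (φ : (ι → ZMod 2) → ι → ZMod 2) : Prop where
  eqOrCompl_map_zero : EqOrCompl (φ 0) 0
  foldedNorm_map_add : ∀ x y, Even (hammingNorm x) → Even (hammingNorm y) →
    foldedNorm (φ x + φ y) = foldedNorm (x + y)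

variable {φ : (ι → ZMod 2) → ι → ZMod 2}

theorem IsEvenFoldedIsometry.foldedNorm_map (hφ : IsEvenFoldedIsometry φ) {x : ι → ZMod 2}
    (hx : Even (hammingNorm x)) : foldedNorm (φ x) = foldedNorm x := by
  have hadd : EqOrCompl (φ x + φ 0) (φ x + 0) := .add (.inl rfl) hφ.eqOrCompl_map_zero
  rw [← add_zero (φ x), ← hadd.foldedNorm_eq, hφ.foldedNorm_map_add x 0 hx (by simp), add_zero]

section Star

variable [DecidableEq ι]

theorem IsEvenFoldedIsometry.foldedNorm_map_pairWord_add (hφ : IsEvenFoldedIsometry φ)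
    (i j k : ι) :
    foldedNorm (φ (pairWord i j) + φ (pairWord i k)) = foldedNorm (pairWord j k) := by
  rw [hφ.foldedNorm_map_add _ _ (even_hammingNorm_pairWord i j) (even_hammingNorm_pairWord i k),
    pairWord_add_pairWord]

theorem IsEvenFoldedIsometry.exists_star (hφ : IsEvenFoldedIsometry φ)
    (hn : 4 ∣ Fintype.card ι) (i : ι) :
    ∃ a, ∀ j, ∃ b, EqOrCompl (φ (pairWord i j)) (pairWord a b) := by
  have hpos : 0 < Fintype.card ι := Fintype.card_pos_iff.mpr ⟨i⟩
  have htwo : ∀ j k : ι, j ≠ k → foldedNorm (pairWord j k) = 2 := fun j k hjk ↦ by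
    rw [foldedNorm_pairWord hjk]; omega
  have hnorm : ∀ j ≠ i, foldedNorm (φ (pairWord i j)) = 2 := fun j hj ↦ by
    rw [hφ.foldedNorm_map (even_hammingNorm_pairWord i j), htwo i j hj.symm]
  suffices ∃ a, ∀ j ≠ i, ∃ b, EqOrCompl (φ (pairWord i j)) (pairWord a b) by
    obtain ⟨a, ha⟩ := this
    refine ⟨a, fun j ↦ ?_⟩
    rcases eq_or_ne j i with rfl | hj
    · exact ⟨a, by simpa only [pairWord_self] using hφ.eqOrCompl_map_zero⟩
    · exact ha j hj
  rcases Nat.lt_or_ge 6 (Fintype.card ι) with hlarge | hsmall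
  · choose! y hy hy_norm using fun j hj ↦ exists_eqOrCompl_hammingNorm_eq (hnorm j hj)
    obtain ⟨a, ha⟩ := exists_common_coordinate_of_foldedNorm_add_eq_two hlarge hy_norm
      fun j hj k hk hjk ↦ by
        rw [← ((hy j hj).add (hy k hk)).foldedNorm_eq, hφ.foldedNorm_map_pairWord_add, htwo j k hjk]
    refine ⟨a, fun j hj ↦ ?_⟩
    obtain ⟨b, hb⟩ := exists_eq_pairWord (hy_norm j hj) (ha j hj)
    exact ⟨b, hb ▸ hy j hj⟩
  · exact ⟨i, fun j hj ↦ exists_eqOrCompl_pairWord_of_card_eq_four (by omega) (hnorm j hj) i⟩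

theorem IsEvenFoldedIsometry.exists_perm_pairWord (hφ : IsEvenFoldedIsometry φ)
    (hn : 4 ∣ Fintype.card ι) (i : ι) :
    ∃ σ : Equiv.Perm ι, ∀ j, EqOrCompl (φ (pairWord i j)) (pairWord (σ i) (σ j)) := by
  have hpos : 0 < Fintype.card ι := Fintype.card_pos_iff.mpr ⟨i⟩
  have heq_of_norm : ∀ j k : ι, foldedNorm (pairWord j k) = 0 → j = k := fun j k h ↦ by
    by_contra hjk
    rw [foldedNorm_pairWord hjk] at h
    omega
  obtain ⟨a, ha⟩ := hφ.exists_star hn i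
  choose σ hσ using ha
  have hinj : σ.Injective := fun j k hjk ↦ heq_of_norm j k <| by
    rw [← hφ.foldedNorm_map_pairWord_add i, ((hσ j).add (hσ k)).foldedNorm_eq,
      pairWord_add_pairWord, hjk, pairWord_self, foldedNorm_zero]
  have hcentre : a = σ i := heq_of_norm _ _ <| by
    rw [← (hσ i).foldedNorm_eq, pairWord_self, hφ.eqOrCompl_map_zero.foldedNorm_eq, foldedNorm_zero]
  exact ⟨.ofBijective σ (Finite.injective_iff_bijective.mp hinj), fun j ↦ by
    simpa only [Equiv.ofBijective_apply, ← hcentre] using hσ j⟩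

end Star

theorem IsEvenFoldedIsometry.exists_perm (hφ : IsEvenFoldedIsometry φ)
    (hn : 4 ∣ Fintype.card ι) (i : ι) :
    ∃ π : Equiv.Perm ι, ∀ c, Even (hammingNorm c) → EqOrCompl (φ c) (c ∘ π) := by
  classical
  obtain ⟨σ, hσ⟩ := hφ.exists_perm_pairWord hn i
  refine ⟨σ.symm, fun c hc ↦ ?_⟩
  have hnorm := hφ.foldedNorm_map hc
  have hφc := (even_hammingNorm_iff_of_foldedNorm_eq (even_iff_two_dvd.mpr (by omega)) hnorm).mpr hc
  have hbits : ∀ j, φ c (σ i) ≠ φ c (σ j) ↔ c i ≠ c j := fun j ↦ by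
    rcases eq_or_ne i j with rfl | hij
    · simp
    have hadd : EqOrCompl (φ c + φ (pairWord i j)) (φ c + pairWord (σ i) (σ j)) :=
      .add (.inl rfl) (hσ j)
    rw [← foldedNorm_add_pairWord_eq_iff hn hφc (σ.injective.ne hij),
      ← foldedNorm_add_pairWord_eq_iff hn hc hij, ← hadd.foldedNorm_eq, hnorm,
      hφ.foldedNorm_map_add _ _ hc (even_hammingNorm_pairWord i j)]
  have hshift : ∀ j, φ c (σ j) = c j + (φ c (σ i) + c i) := fun j ↦ by
    have hbit : ∀ p q r s : ZMod 2, (p ≠ q ↔ r ≠ s) → q = s + (p + r) := by decide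
    exact hbit _ _ _ _ (hbits j)
  have hconst : ∀ t : ZMod 2, t = 0 ∨ t = 1 := by decide
  rcases hconst (φ c (σ i) + c i) with h | h
  · exact .inl (funext fun k ↦ by simpa [h] using hshift (σ.symm k))
  · exact .inr (funext fun k ↦ by simpa [h] using hshift (σ.symm k))

end EvenFoldedIsometry

section Twist

variable {ι : Type*}

open scoped Classical in
/-- The paper's modification of the coordinate permutation `π`: the image of `c` is complemented
when the pair `{c, c + 1̄}` meets `S`. -/
noncomputable def twist (π : Equiv.Perm ι) (S : Set (ι → ZMod 2)) (c : ι → ZMod 2) :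
    ι → ZMod 2 :=
  if ({c, c + 1} : Set (ι → ZMod 2)) ∩ S = ∅ then c ∘ π else c ∘ π + 1

theorem eq_add_twist_iff {π : Equiv.Perm ι} {S : Set (ι → ZMod 2)} {b c x : ι → ZMod 2} :
    x = b + twist π S c ↔ (({c, c + 1} : Set (ι → ZMod 2)) ∩ S = ∅ → x = b + c ∘ π) ∧
      (({c, c + 1} : Set (ι → ZMod 2)) ∩ S ≠ ∅ → x = b + c ∘ π + 1) := by
  unfold twist
  split_ifs with h <;> simp [h, add_assoc]

theorem eq_twist_iff {π : Equiv.Perm ι} {S : Set (ι → ZMod 2)} {c x : ι → ZMod 2} :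
    x = twist π S c ↔ (({c, c + 1} : Set (ι → ZMod 2)) ∩ S = ∅ → x = c ∘ π) ∧
      (({c, c + 1} : Set (ι → ZMod 2)) ∩ S ≠ ∅ → x = c ∘ π + 1) := by
  simpa only [zero_add] using eq_add_twist_iff (b := 0) (π := π) (S := S) (c := c) (x := x)

theorem eqOrCompl_twist (π : Equiv.Perm ι) (S : Set (ι → ZMod 2)) (c : ι → ZMod 2) :
    EqOrCompl (twist π S c) (c ∘ π) := by
  unfold twist
  split_ifs
  · exact .inl rfl
  · exact .inr rfl

theorem twist_add_one (π : Equiv.Perm ι) (S : Set (ι → ZMod 2)) (c : ι → ZMod 2) :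
    twist π S (c + 1) = twist π S c + 1 := by
  have hcomp : (c + 1) ∘ π = c ∘ π + 1 := rfl
  simp only [twist, add_one_add_one, Set.pair_comm (c + 1) c, hcomp]
  split_ifs
  · rfl
  · exact (add_one_add_one _).symm

variable [Fintype ι]

theorem isPIsometry_twist (hn : Even (Fintype.card ι)) (π : Equiv.Perm ι)
    (S : Set (ι → ZMod 2)) :
    IsPIsometry {Fintype.card ι / 2, Fintype.card ι} (twist π S) := by
  rintro x y (hxy | hxy)
  · have hperm : x ∘ π + y ∘ π = (x + y) ∘ π := rfl
    have hfolded := ((eqOrCompl_twist π S x).add (eqOrCompl_twist π S y)).foldedNorm_eq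
    rw [hxy]
    rw [hammingDist_eq_hammingNorm_add, hammingNorm_eq_half_iff hn] at hxy ⊢
    rw [hfolded, hperm, ← hxy, foldedNorm, foldedNorm, hammingNorm_comp_perm]
  · obtain rfl : y = x + 1 := hammingDist_eq_card_iff.mp hxy
    rw [hxy, hammingDist_eq_card_iff, twist_add_one]

/-- The paper's `E_X`, for the distinguished coordinate `i₀`: one word from each complementary
pair of even-weight words. -/
def evenRepresentatives (i₀ : ι) : Set (ι → ZMod 2) :=
  {c | (hammingNorm c < Fintype.card ι / 2 ∨
    (hammingNorm c = Fintype.card ι / 2 ∧ c i₀ = 0)) ∧ Even (hammingNorm c)}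

theorem mem_or_add_one_mem_evenRepresentatives (hn : Even (Fintype.card ι)) (i₀ : ι)
    {c : ι → ZMod 2} (hc : Even (hammingNorm c)) :
    c ∈ evenRepresentatives i₀ ∨ c + 1 ∈ evenRepresentatives i₀ := by
  have hcompl := hammingNorm_add_one c
  have hbit : ∀ t : ZMod 2, t = 0 ∨ t + 1 = 0 := by decide
  have := hbit (c i₀)
  simp only [evenRepresentatives, Set.mem_ofPred_eq, Pi.add_apply, Pi.one_apply]
  grind

theorem exists_eq_twist (hn : Even (Fintype.card ι)) (i₀ : ι)
    {φ : (ι → ZMod 2) → ι → ZMod 2} {π : Equiv.Perm ι} (hone : ∀ c, φ (c + 1) = φ c + 1)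
    (hπ : ∀ c, Even (hammingNorm c) → EqOrCompl (φ c) (c ∘ π)) :
    ∃ S ⊆ evenRepresentatives i₀, ∀ c, Even (hammingNorm c) → φ c = twist π S c := by
  refine ⟨{c ∈ evenRepresentatives i₀ | φ c = c ∘ π + 1}, Set.sep_subset _ _, fun c hc ↦ ?_⟩
  have hrep := mem_or_add_one_mem_evenRepresentatives hn i₀ hc
  have hone_iff : φ (c + 1) = (c + 1) ∘ π + 1 ↔ φ c = c ∘ π + 1 := by
    rw [hone, show (c + 1) ∘ π = c ∘ π + 1 from rfl, add_left_inj]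
  have hmeets : ({c, c + 1} ∩ {c ∈ evenRepresentatives i₀ | φ c = c ∘ π + 1} : Set _) = ∅ ↔
      ¬φ c = c ∘ π + 1 := by
    simp only [Set.insert_eq, Set.union_inter_distrib_right, Set.union_empty_iff,
      Set.singleton_inter_eq_empty, Set.mem_sep_iff, hone_iff]
    tauto
  rw [eq_twist_iff, Ne, hmeets, not_not]
  exact ⟨(hπ c hc).resolve_right, id⟩

end Twist

section HalfIsometry

variable {ι : Type*} [Fintype ι] {P : Set ℕ} {φ : (ι → ZMod 2) → ι → ZMod 2}

theorem IsPIsometry.exists_twist_of_even (h : IsPIsometry P φ) (hφ : φ.Injective)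
    (hn : 4 ∣ Fintype.card ι) (hhalf : Fintype.card ι / 2 ∈ P) (hcard : Fintype.card ι ∈ P)
    (h0 : EqOrCompl (φ 0) 0) (i₀ : ι) :
    ∃ (π : Equiv.Perm ι) (S : Set (ι → ZMod 2)), S ⊆ evenRepresentatives i₀ ∧
      ∀ c, Even (hammingNorm c) → φ c = twist π S c := by
  have heven : Even (Fintype.card ι) := even_iff_two_dvd.mpr (by omega)
  have hfolded : IsEvenFoldedIsometry φ := ⟨h0, fun x y hx hy ↦
    h.foldedNorm_map_add hφ hhalf heven (even_hammingNorm_add_iff.mpr (iff_of_true hx hy))⟩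
  obtain ⟨π, hπ⟩ := hfolded.exists_perm hn i₀
  exact ⟨π, exists_eq_twist heven i₀ (h.map_add_one hcard) hπ⟩

theorem IsPIsometry.exists_twist_of_odd (h : IsPIsometry P φ) (hφ : φ.Injective)
    (hn : 4 ∣ Fintype.card ι) (hhalf : Fintype.card ι / 2 ∈ P) (hcard : Fintype.card ι ∈ P)
    {a : ι → ZMod 2} (ha : Odd (hammingNorm a)) (i₀ : ι) :
    ∃ (π : Equiv.Perm ι) (S : Set (ι → ZMod 2)), S ⊆ evenRepresentatives i₀ ∧
      ∀ c, Odd (hammingNorm c) → φ c = φ a + twist π S (c + a) := by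
  have h0 : EqOrCompl (φ a + φ (0 + a)) 0 := .inl (by rw [zero_add, ZModModule.add_self])
  obtain ⟨π, S, hS, hψ⟩ := (h.translate a (φ a)).exists_twist_of_even
    ((add_right_injective _).comp (hφ.comp (add_left_injective a))) hn hhalf hcard h0 i₀
  refine ⟨π, S, hS, fun c hc ↦ ?_⟩
  have hca : Even (hammingNorm (c + a)) := even_hammingNorm_add_iff.mpr (iff_of_false
    (Nat.not_even_iff_odd.mpr hc) (Nat.not_even_iff_odd.mpr ha))
  rw [← hψ (c + a) hca, ← add_assoc, ZModModule.add_self, zero_add, add_assoc,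
    ZModModule.add_self, add_zero]

end HalfIsometry

end BooleanCube

open BooleanCube in
theorem halfIsometry_classification_of_four_dvd_general {ι : Type*} [Fintype ι]
    (hn : 4 ∣ Fintype.card ι) (i₀ : ι) {φ : (ι → ZMod 2) → ι → ZMod 2} (hφ : φ.Injective)
    (h0 : EqOrCompl (φ 0) 0) :
    IsPIsometry {Fintype.card ι / 2, Fintype.card ι} φ ↔
      ∃ (π₁ π₂ : Equiv.Perm ι) (S₁ S₂ : Set (ι → ZMod 2)) (a b : ι → ZMod 2),
        S₁ ⊆ evenRepresentatives i₀ ∧ S₂ ⊆ evenRepresentatives i₀ ∧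
        Odd (hammingNorm a) ∧ Odd (hammingNorm b) ∧
        (∀ c, Even (hammingNorm c) → φ c = twist π₁ S₁ c) ∧
        ∀ c, Odd (hammingNorm c) → φ c = b + twist π₂ S₂ (c + a) := by
  classical
  have heven : Even (Fintype.card ι) := even_iff_two_dvd.mpr (by omega)
  constructor
  · intro h
    have ha : Odd (hammingNorm (Pi.single i₀ 1 : ι → ZMod 2)) := by simp [hammingNorm_single_one]
    obtain ⟨π₁, S₁, hS₁, hφ₁⟩ := h.exists_twist_of_even hφ hn (by simp) (by simp) h0 i₀
    obtain ⟨π₂, S₂, hS₂, hφ₂⟩ := h.exists_twist_of_odd hφ hn (by simp) (by simp) ha i₀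
    refine ⟨π₁, π₂, S₁, S₂, _, _, hS₁, hS₂, ha, ?_, hφ₁, hφ₂⟩
    have hφ0 : Even (hammingNorm (φ 0)) :=
      (even_hammingNorm_iff_of_foldedNorm_eq heven h0.foldedNorm_eq).mpr (by simp)
    have hparity := h.even_hammingNorm_map_add_iff hφ (by simp) heven (Pi.single i₀ 1) 0
    rw [add_zero, even_hammingNorm_add_iff, iff_true_right hφ0] at hparity
    rwa [← Nat.not_even_iff_odd, hparity, Nat.not_even_iff_odd]
  · rintro ⟨π₁, π₂, S₁, S₂, a, b, -, -, -, -, hφ₁, hφ₂⟩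
    exact isPIsometry_of_eq_on_even_of_eq_on_odd
      (by rintro d (rfl | rfl); exacts [even_iff_two_dvd.mpr (by omega), heven])
      (isPIsometry_twist heven π₁ S₁) ((isPIsometry_twist heven π₂ S₂).translate a b) hφ₁ hφ₂

/-- For `4 ∣ n`, a bijection of the Boolean cube `C_n` stabilizing `{0̄, 1̄}` is an
`{n/2, n}`-isometry if and only if it is given, independently on even- and odd-weight
words, by the construction of Theorem `half2`: permutations `π₁, π₂`, subsets
`S₁, S₂ ⊆ E_X` and odd-weight words `a, b`. -/
theorem halfIsometry_classification_of_four_dvd (n : ℕ) (hn : 4 ∣ n) (hn0 : 0 < n)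
    (φ : (Fin n → ZMod 2) → Fin n → ZMod 2) (hbij : Function.Bijective φ)
    (hstab : φ '' {0, 1} = {0, 1}) :
    (∀ x y, (hammingDist x y = n / 2 ∨ hammingDist x y = n) →
      hammingDist (φ x) (φ y) = hammingDist x y) ↔
    (∃ (π₁ π₂ : Equiv.Perm (Fin n)) (S₁ S₂ : Set (Fin n → ZMod 2))
        (a b : Fin n → ZMod 2),
      S₁ ⊆ {c | (hammingNorm c < n / 2 ∨
        (hammingNorm c = n / 2 ∧ c ⟨0, hn0⟩ = 0)) ∧ Even (hammingNorm c)} ∧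
      S₂ ⊆ {c | (hammingNorm c < n / 2 ∨
        (hammingNorm c = n / 2 ∧ c ⟨0, hn0⟩ = 0)) ∧ Even (hammingNorm c)} ∧
      Odd (hammingNorm a) ∧ Odd (hammingNorm b) ∧
      (∀ c, Even (hammingNorm c) →
        (({c, c + 1} : Set (Fin n → ZMod 2)) ∩ S₁ = ∅ →
          φ c = fun k => c (π₁ k)) ∧
        (({c, c + 1} : Set (Fin n → ZMod 2)) ∩ S₁ ≠ ∅ →
          φ c = (fun k => c (π₁ k)) + 1)) ∧
      (∀ c, Odd (hammingNorm c) →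
        (({c + a, c + a + 1} : Set (Fin n → ZMod 2)) ∩ S₂ = ∅ →
          φ c = b + (fun k => (c + a) (π₂ k))) ∧
        (({c + a, c + a + 1} : Set (Fin n → ZMod 2)) ∩ S₂ ≠ ∅ →
          φ c = b + (fun k => (c + a) (π₂ k)) + 1))) := by
  have h0 : φ 0 ∈ ({0, 1} : Set (Fin n → ZMod 2)) := hstab ▸ ⟨0, by simp, rfl⟩
  have h := halfIsometry_classification_of_four_dvd_general (by rwa [Fintype.card_fin])
    (⟨0, hn0⟩ : Fin n) hbij.injective (by simpa [BooleanCube.EqOrCompl] using h0)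
  simpa only [BooleanCube.IsPIsometry, BooleanCube.evenRepresentatives, BooleanCube.eq_twist_iff,
    BooleanCube.eq_add_twist_iff, Function.comp_def, Fintype.card_fin, Set.mem_insert_iff,
    Set.mem_singleton_iff] using h
end
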